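/- Let N ≥ 1 be an integer and X : [0,N] → ℝ^d a continuously differentiable path, extended to ℝ by its constant boundary values. For every integer l ≥ 2 and every word (j_1,…,j_l) with letters in {1,…,d}, the signature satisfies the recursion ⟨S_{0,N}(X),(j_1,…,j_l)⟩ = Σ_{k=0}^{N−1} ⟨S_{0,k}(X),(j_1,…,j_{l−1})⟩·(X^{j_l}_{k+1} − X^{j_l}_k) + Σ_{p=2}^{l} (−1)^{p+1}·⟨S_{0,N}(X),(j_1,…,j_{l−p})⟩·⟨Z_N,(j_{l−p+1},…,j_l)⟩, where the term with p = l uses the empty word, ⟨S_{0,N}(X),∅⟩ = 1. -/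

import Mathlib

open scoped Nat
open MeasureTheory

/-- The open simplex `{(t_1,…,t_n) : s < t_1 < ⋯ < t_n < t}` in `ℝ^n`. -/
def simplexSet (n : ℕ) (s t : ℝ) : Set (Fin n → ℝ) :=
  {u | (∀ i, s < u i ∧ u i < t) ∧ ∀ i j : Fin n, i < j → u i < u j}

/-- Signature coefficient `⟨S_{s,t}(X), (w 0, …, w (n-1))⟩` of the path `X` over `[s,t]`,
for the word given by the first `n` letters of `w`; equal to `1` for the empty word. -/
noncomputable def sigCoeff {d : ℕ} (X : ℝ → Fin d → ℝ) (s t : ℝ) (n : ℕ) (w : ℕ → Fin d) : ℝ :=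
  if n = 0 then 1 else
    ∫ u in simplexSet n s t, ∏ k : Fin n, deriv (fun r => X r (w k)) (u k)

open Set intervalIntegral

lemma measurableSet_simplexSet (n : ℕ) (s t : ℝ) : MeasurableSet (simplexSet n s t) := by
  have : simplexSet n s t = (⋂ i : Fin n, {u | s < u i} ∩ {u | u i < t}) ∩
      ⋂ i : Fin n, ⋂ j : Fin n, ⋂ _ : i < j, {u | u i < u j} := by
    ext u
    simp [simplexSet]
  rw [this]
  refine (MeasurableSet.iInter fun i => ?_).inter
    (MeasurableSet.iInter fun i => MeasurableSet.iInter fun j => MeasurableSet.iInter fun _ => ?_)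
  · exact (measurableSet_lt measurable_const (measurable_pi_apply i)).inter
      (measurableSet_lt (measurable_pi_apply i) measurable_const)
  · exact measurableSet_lt (measurable_pi_apply i) (measurable_pi_apply j)

lemma simplexSet_subset_Icc (n : ℕ) (s t : ℝ) :
    simplexSet n s t ⊆ Icc (fun _ => s) (fun _ => t) :=
  fun _ hu => ⟨fun i => (hu.1 i).1.le, fun i => (hu.1 i).2.le⟩

/-- Splitting off the largest coordinate of a point of the simplex. -/
lemma mem_simplexSet_succ_iff {n : ℕ} {s t : ℝ} {u : Fin (n + 1) → ℝ} :
    u ∈ simplexSet (n + 1) s t ↔ u (Fin.last n) ∈ Ioo s t ∧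
      (fun i : Fin n => u i.castSucc) ∈ simplexSet n s (u (Fin.last n)) := by
  simp only [simplexSet, mem_ofPred_eq, Fin.forall_fin_succ', mem_Ioo]
  constructor
  · rintro ⟨⟨h1, h2⟩, h3, -⟩
    refine ⟨h2, fun i => ⟨(h1 i).1, (h3 i).2 (Fin.castSucc_lt_last i)⟩, fun i j hij =>
      (h3 i).1 j (Fin.castSucc_lt_castSucc_iff.2 hij)⟩
  · rintro ⟨h2, h1, h3⟩
    refine ⟨⟨fun i => ⟨(h1 i).1, (h1 i).2.trans h2.2⟩, h2⟩, fun i => ⟨fun j hij =>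
      h3 i j (Fin.castSucc_lt_castSucc_iff.1 hij), fun _ => (h1 i).2⟩, fun j hj => ?_, fun hj => ?_⟩
    · exact absurd hj (Fin.castSucc_lt_last j).not_gt
    · exact absurd hj (lt_irrefl _)

lemma setIntegral_simplexSet_succ {h : ℕ → ℝ → ℝ} (hc : ∀ k, Continuous (h k)) (n : ℕ) {t : ℝ}
    (ht : 0 ≤ t) :
    ∫ u in simplexSet (n + 1) 0 t, ∏ k : Fin (n + 1), h k (u k) =
      ∫ s in (0 : ℝ)..t, (∫ u in simplexSet n 0 s, ∏ k : Fin n, h k (u k)) * h n s := by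
  let e := MeasurableEquiv.piFinSuccAbove (fun _ : Fin (n + 1) => ℝ) (Fin.last n)
  have he : MeasurePreserving e := volume_preserving_piFinSuccAbove _ _
  let F : ℝ × (Fin n → ℝ) → ℝ := fun q =>
    (Ioo (0 : ℝ) t).indicator
      (fun s => (simplexSet n 0 s).indicator (fun u => ∏ k : Fin n, h k (u k)) q.2 * h n s) q.1
  have hF : ∀ u, F (e u) =
      (simplexSet (n + 1) 0 t).indicator (fun u => ∏ k : Fin (n + 1), h k (u k)) u := by
    intro u
    have h1 : (e u).1 = u (Fin.last n) := rfl
    have h2 : (e u).2 = fun i : Fin n => u i.castSucc := by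
      ext i
      simp [e, MeasurableEquiv.piFinSuccAbove, Fin.init]
    have h3 := mem_simplexSet_succ_iff (s := 0) (t := t) (u := u)
    simp only [F, h1, h2, Fin.prod_univ_castSucc, Fin.val_castSucc, Fin.val_last]
    by_cases hs : u (Fin.last n) ∈ Ioo 0 t
    · rw [indicator_of_mem hs]
      by_cases hu : (fun i : Fin n => u i.castSucc) ∈ simplexSet n 0 (u (Fin.last n))
      · rw [indicator_of_mem hu, indicator_of_mem (h3.2 ⟨hs, hu⟩)]
      · rw [indicator_of_notMem hu, indicator_of_notMem fun h => hu (h3.1 h).2, zero_mul]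
    · rw [indicator_of_notMem hs, indicator_of_notMem fun h => hs (h3.1 h).1]
  have hint : Integrable
      ((simplexSet (n + 1) 0 t).indicator (fun u => ∏ k : Fin (n + 1), h k (u k))) := by
    rw [integrable_indicator_iff (measurableSet_simplexSet _ _ _)]
    refine IntegrableOn.mono_set ?_ (simplexSet_subset_Icc _ _ _)
    refine Continuous.integrableOn_Icc ?_
    exact continuous_finsetProd _ fun k _ => (hc k).comp (continuous_apply k)
  have hFint : Integrable F := by
    rw [← he.integrable_comp_emb e.measurableEmbedding]
    exact hint.congr (Filter.Eventually.of_forall fun u => (hF u).symm)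
  rw [← MeasureTheory.integral_indicator (measurableSet_simplexSet _ _ _)]
  simp_rw [← hF]
  rw [he.integral_comp', Measure.volume_eq_prod, integral_prod F hFint,
    integral_of_le ht, integral_Ioc_eq_integral_Ioo,
    ← MeasureTheory.integral_indicator measurableSet_Ioo]
  congr 1 with s
  by_cases hs : s ∈ Ioo 0 t
  · simp only [F, indicator_of_mem hs, MeasureTheory.integral_mul_const]
    rw [MeasureTheory.integral_indicator (measurableSet_simplexSet _ _ _)]
  · simp [F, indicator_of_notMem hs]

/-- The iterated integral `∫_{0<t_1<⋯<t_n<t} h_0(t_1)⋯h_{n-1}(t_n)`, defined recursively. -/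
noncomputable def iterIntegral (h : ℕ → ℝ → ℝ) : ℕ → ℝ → ℝ
  | 0, _ => 1
  | n + 1, t => ∫ s in (0 : ℝ)..t, iterIntegral h n s * h n s

lemma continuous_iterIntegral {h : ℕ → ℝ → ℝ} (hc : ∀ k, Continuous (h k)) (n : ℕ) :
    Continuous (iterIntegral h n) := by
  induction n with
  | zero => exact continuous_const
  | succ n ih => exact continuous_primitive (fun a b => (ih.mul (hc n)).intervalIntegrable a b) 0

lemma hasDerivAt_iterIntegral_succ {h : ℕ → ℝ → ℝ} (hc : ∀ k, Continuous (h k)) (n : ℕ) (t : ℝ) :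
    HasDerivAt (iterIntegral h (n + 1)) (iterIntegral h n t * h n t) t :=
  ((continuous_iterIntegral hc n).mul (hc n)).integral_hasStrictDerivAt 0 t |>.hasDerivAt

lemma setIntegral_simplexSet_eq_iterIntegral {h : ℕ → ℝ → ℝ} (hc : ∀ k, Continuous (h k)) (n : ℕ)
    {t : ℝ} (ht : 0 ≤ t) :
    ∫ u in simplexSet n 0 t, ∏ k : Fin n, h k (u k) = iterIntegral h n t := by
  induction n generalizing t with
  | zero =>
    have : simplexSet 0 0 t = univ := by ext; simp [simplexSet]
    simp [this, iterIntegral, measureReal_def, volume_pi]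
  | succ n ih =>
    rw [setIntegral_simplexSet_succ hc n ht, iterIntegral]
    refine integral_congr fun s hs => ?_
    rw [uIcc_of_le ht] at hs
    simp only [ih hs.1]

/-- Integration by parts of a primitive against a `C¹` function. -/
lemma integral_mul_eq_sub_of_primitive {f F G G' : ℝ → ℝ} {T : ℝ} (hT : 0 ≤ T)
    (hf : IntervalIntegrable f volume 0 T) (hF : ∀ t ∈ Icc 0 T, F t = ∫ s in (0 : ℝ)..t, f s)
    (hG : ∀ t, HasDerivAt G (G' t) t) (hG' : Continuous G') :
    ∫ s in (0 : ℝ)..T, G s * f s = G T * F T - ∫ s in (0 : ℝ)..T, G' s * F s := by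
  have hGd : deriv G = G' := funext fun t => (hG t).deriv
  have hGC : ContDiff ℝ 1 G :=
    contDiff_one_iff_deriv.2 ⟨fun t => (hG t).differentiableAt, hGd ▸ hG'⟩
  have key := AbsolutelyContinuousOnInterval.integral_mul_deriv_eq_deriv_mul
    (hGC.contDiffOn.absolutelyContinuousOnInterval (a := 0) (b := T))
    (hf.absolutelyContinuousOnInterval_intervalIntegral (left_mem_uIcc))
  rw [hGd] at key
  simp only [integral_same, mul_zero, sub_zero] at key
  rw [hF T ⟨hT, le_rfl⟩]
  convert key using 1
  · refine integral_congr_ae ?_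
    filter_upwards [hf.ae_hasDerivAt_integral] with x hx hxm
    rw [(hx (uIoc_subset_uIcc hxm) 0 left_mem_uIcc).deriv]
  · congr 1
    refine integral_congr fun s hs => ?_
    rw [uIcc_of_le hT] at hs
    simp only [hF s hs]

/-- Repeated integration by parts of iterated integrals against backward iterated primitives. -/
lemma integral_iterIntegral_mul_eq_sum {h z : ℕ → ℝ → ℝ} (hc : ∀ k, Continuous (h k)) {T : ℝ}
    (hT : 0 ≤ T) {M : ℕ} (hzi : ∀ m ≤ M, IntervalIntegrable (z m) volume 0 T)
    (hz : ∀ m < M, ∀ t ∈ Icc 0 T, z m t = ∫ s in (0 : ℝ)..t, h m s * z (m + 1) s)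
    (m : ℕ) (hm : m < M) :
    ∫ s in (0 : ℝ)..T, iterIntegral h m s * (h m s * z (m + 1) s) =
      ∑ q ∈ Finset.range (m + 1), (-1) ^ q * iterIntegral h (m - q) T * z (m - q) T := by
  induction m with
  | zero => simp [iterIntegral, hz 0 hm T ⟨hT, le_rfl⟩]
  | succ m ih =>
    rw [integral_mul_eq_sub_of_primitive hT ((hzi (m + 2) hm).continuousOn_mul (hc _).continuousOn)
      (hz (m + 1) hm) (hasDerivAt_iterIntegral_succ hc m)
      ((continuous_iterIntegral hc m).mul (hc m)), Finset.sum_range_succ']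
    simp only [mul_assoc] at ih ⊢
    rw [ih (by omega)]
    simp only [pow_succ, Nat.add_sub_add_right, pow_zero, Nat.sub_zero, one_mul, mul_neg, mul_one,
      neg_mul, Finset.sum_neg_distrib]
    ring

lemma intervalIntegrable_of_backward_primitive {h z : ℕ → ℝ → ℝ} (hc : ∀ k, Continuous (h k))
    {T : ℝ} (hT : 0 ≤ T) {M : ℕ} (hzM : IntervalIntegrable (z M) volume 0 T)
    (hz : ∀ m < M, ∀ t ∈ Icc 0 T, z m t = ∫ s in (0 : ℝ)..t, h m s * z (m + 1) s)
    (m : ℕ) (hm : m ≤ M) : IntervalIntegrable (z m) volume 0 T := by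
  induction hm using Nat.decreasingInduction with
  | self => exact hzM
  | of_succ m hm ih =>
    have h1 : ContinuousOn (fun t => ∫ s in (0 : ℝ)..t, h m s * z (m + 1) s) (uIcc 0 T) :=
      continuousOn_primitive_interval' (ih.continuousOn_mul (hc m).continuousOn) left_mem_uIcc
    refine (h1.congr fun t ht => hz m hm t ?_).intervalIntegrable
    rwa [uIcc_of_le hT] at ht

/-- Summation by parts along the integer grid of an integral against `dY`. -/
lemma integral_mul_eq_sum_sub_integral {G G' Y y Z : ℝ → ℝ} (N : ℕ)
    (hG : ∀ t, HasDerivAt G (G' t) t) (hG' : Continuous G')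
    (hY : ∀ t, HasDerivAt Y (y t) t) (hy : Continuous y)
    (hZ : ∀ k < N, ∀ t ∈ Ioo (k : ℝ) (k + 1), Z t = Y t - Y (k + 1)) :
    IntervalIntegrable Z volume 0 N ∧
    ∫ s in (0 : ℝ)..N, G s * y s =
      ∑ k ∈ Finset.range N, G k * (Y (k + 1) - Y k) - ∫ s in (0 : ℝ)..N, G' s * Z s := by
  have hYc : Continuous Y := continuous_iff_continuousAt.2 fun t => (hY t).continuousAt
  have hGc : Continuous G := continuous_iff_continuousAt.2 fun t => (hG t).continuousAt
  have hle (k : ℕ) : (k : ℝ) ≤ k + 1 := by linarith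
  have hZi : ∀ k < N, IntervalIntegrable Z volume ((k : ℕ) : ℝ) ((k + 1 : ℕ) : ℝ) := by
    intro k hk
    push_cast
    refine IntervalIntegrable.congr_uIoo (f := fun t => Y t - Y (k + 1))
      ((hYc.sub continuous_const).intervalIntegrable _ _) ?_
    intro t ht
    rw [uIoo_of_le (hle k)] at ht
    exact (hZ k hk t ht).symm
  have hZN := IntervalIntegrable.trans_iterate (a := fun k : ℕ => (k : ℝ)) hZi
  refine ⟨by simpa using hZN, ?_⟩
  have s1 := sum_integral_adjacent_intervals (μ := volume) (a := fun k : ℕ => (k : ℝ)) (n := N)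
    (f := fun s => G s * y s) (fun k _ => (hGc.mul hy).intervalIntegrable _ _)
  have s2 := sum_integral_adjacent_intervals (μ := volume) (a := fun k : ℕ => (k : ℝ)) (n := N)
    (f := fun s => G' s * Z s) (fun k hk => (hZi k hk).continuousOn_mul hG'.continuousOn)
  simp only [Nat.cast_zero] at s1 s2
  rw [← s1, ← s2, ← Finset.sum_sub_distrib]
  refine Finset.sum_congr rfl fun k hk => ?_
  push_cast
  have h3 := integral_mul_deriv_eq_deriv_mul (a := (k : ℝ)) (b := k + 1) (u := G)
    (v := fun t => Y t - Y (k + 1)) (fun t _ => hG t) (fun t _ => (hY t).sub_const _)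
    (hG'.intervalIntegrable _ _) (hy.intervalIntegrable _ _)
  rw [h3, integral_congr_Ioo_of_le (f := fun s => G' s * Z s)
    (g := fun s => G' s * (Y s - Y (k + 1))) (hle k)
    fun t ht => by simp only [hZ k (Finset.mem_range.1 hk) t ht]]
  ring

/-- A function that is `C¹` on `[0,T]` is there the primitive of a continuous function. -/
lemma exists_continuous_deriv_of_contDiffOn {f : ℝ → ℝ} {T : ℝ} (hT : 0 < T)
    (hf : ContDiffOn ℝ 1 f (Icc 0 T)) :
    ∃ g : ℝ → ℝ, Continuous g ∧ (∀ t ∈ Ioo 0 T, deriv f t = g t) ∧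
      ∀ t ∈ Icc 0 T, f t = f 0 + ∫ s in (0 : ℝ)..t, g s := by
  have hd : ContinuousOn (derivWithin f (Icc 0 T)) (Icc 0 T) :=
    hf.continuousOn_derivWithin (uniqueDiffOn_Icc hT) le_rfl
  let g := IccExtend hT.le ((Icc 0 T).domRestrict (derivWithin f (Icc 0 T)))
  have hgc : Continuous g := hd.domRestrict.Icc_extend'
  have hg : ∀ t ∈ Ioo 0 T, deriv f t = g t := fun t ht => by
    simp only [g]
    rw [IccExtend_of_mem _ _ (Ioo_subset_Icc_self ht), domRestrict_apply,
      derivWithin_of_mem_nhds (Icc_mem_nhds ht.1 ht.2)]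
  refine ⟨g, hgc, hg, fun t ht => ?_⟩
  rw [integral_eq_sub_of_hasDerivAt_of_le ht.1 (hf.continuousOn.mono (Icc_subset_Icc_right ht.2))
    (fun s hs => ?_) (hgc.intervalIntegrable _ _)]
  · ring
  · have hs' : s ∈ Ioo 0 T := ⟨hs.1, hs.2.trans_le ht.2⟩
    rw [← hg s hs']
    exact ((hf.differentiableOn one_ne_zero).differentiableAt
      (Icc_mem_nhds hs'.1 hs'.2)).hasDerivAt

lemma sigCoeff_eq_iterIntegral {d : ℕ} {X : ℝ → Fin d → ℝ} {g : Fin d → ℝ → ℝ} {T : ℝ}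
    (hgc : ∀ j, Continuous (g j)) (hg : ∀ j, ∀ t ∈ Ioo 0 T, deriv (fun r => X r j) t = g j t)
    {t : ℝ} (ht : t ∈ Icc 0 T) (n : ℕ) (w : ℕ → Fin d) :
    sigCoeff X 0 t n w = iterIntegral (fun k => g (w k)) n t := by
  rw [sigCoeff]
  split_ifs with hn
  · rw [hn, iterIntegral]
  · rw [← setIntegral_simplexSet_eq_iterIntegral (fun k => hgc (w k)) n ht.1]
    refine setIntegral_congr_fun (measurableSet_simplexSet n 0 t) fun u hu => ?_
    exact Finset.prod_congr rfl fun k _ => hg _ _ ⟨(hu.1 k).1, (hu.1 k).2.trans_le ht.2⟩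

/-- Recursion for the signature of a path in terms of discrete Riemann–Stieltjes sums
and the backward sawtooth signature coefficients `Z` (with unit initial datum). -/
theorem signature_sawtooth_recursion {d : ℕ} (N : ℕ) (hN : 1 ≤ N)
    (X : ℝ → Fin d → ℝ)
    (hXdiff : ∀ j, ContDiffOn ℝ 1 (fun r => X r j) (Set.Icc 0 (N : ℝ)))
    (hX0 : ∀ u : ℝ, u ≤ 0 → X u = X 0)
    (hXN : ∀ u : ℝ, (N : ℝ) ≤ u → X u = X (N : ℝ))
    (Z : ℕ → (ℕ → Fin d) → ℝ → ℝ)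
    (hZ1 : ∀ (w : ℕ → Fin d) (t : ℝ),
      Z 1 w t = X t (w 0) - X ((⌊t⌋ : ℝ) + 1) (w 0))
    (hZrec : ∀ n, 2 ≤ n → ∀ (w : ℕ → Fin d) (t : ℝ),
      Z n w t = ∫ s in (0:ℝ)..t,
        deriv (fun r => X r (w 0)) s * Z (n - 1) (fun i => w (i + 1)) s)
    (l : ℕ) (hl : 2 ≤ l) (w : ℕ → Fin d) :
    sigCoeff X 0 (N : ℝ) l w =
      (∑ k ∈ Finset.range N,
        sigCoeff X 0 (k : ℝ) (l - 1) w *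
          (X ((k : ℝ) + 1) (w (l - 1)) - X (k : ℝ) (w (l - 1))))
      + ∑ p ∈ Finset.Icc 2 l,
          (-1 : ℝ) ^ (p + 1) * sigCoeff X 0 (N : ℝ) (l - p) w *
            Z p (fun i => w (l - p + i)) (N : ℝ) := by
  have hN0 : (0 : ℝ) < N := by exact_mod_cast hN
  choose g hgc hg hX using fun j => exists_continuous_deriv_of_contDiffOn hN0 (hXdiff j)
  have hsig : ∀ (k n : ℕ), k ≤ N → sigCoeff X 0 (k : ℝ) n w =
      iterIntegral (fun i => g (w i)) n k := fun k n hk =>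
    sigCoeff_eq_iterIntegral hgc hg ⟨by positivity, by exact_mod_cast hk⟩ n w
  obtain ⟨m, rfl⟩ : ∃ m, l = m + 2 := ⟨l - 2, by omega⟩
  let h : ℕ → ℝ → ℝ := fun i => g (w i)
  have hc : ∀ i, Continuous (h i) := fun i => hgc (w i)
  let z : ℕ → ℝ → ℝ := fun i => Z (m + 2 - i) (fun q => w (i + q))
  have hz : ∀ i < m + 1, ∀ t ∈ Icc (0 : ℝ) N,
      z i t = ∫ s in (0 : ℝ)..t, h i s * z (i + 1) s := by
    intro i hi t ht
    simp only [z]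
    rw [hZrec _ (by omega)]
    refine integral_congr_Ioo_of_le ht.1 fun s hs => ?_
    simp only [h, add_zero, hg _ s ⟨hs.1, hs.2.trans_le ht.2⟩, Nat.sub_sub, add_assoc,
      add_comm 1]
  let Y : ℝ → ℝ := fun t => X 0 (w (m + 1)) + ∫ s in (0 : ℝ)..t, h (m + 1) s
  have hYX : ∀ t ∈ Icc (0 : ℝ) N, X t (w (m + 1)) = Y t := hX _
  have hY : ∀ t, HasDerivAt Y (h (m + 1) t) t := fun t =>
    (((hc (m + 1)).integral_hasStrictDerivAt 0 t).hasDerivAt).const_add _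
  have hmem : ∀ k < N, (k : ℝ) ∈ Icc (0 : ℝ) N ∧ (k : ℝ) + 1 ∈ Icc (0 : ℝ) N := fun k hk => by
    have : (k : ℝ) + 1 ≤ N := by exact_mod_cast hk
    have : (0 : ℝ) ≤ k := by positivity
    constructor <;> constructor <;> linarith
  have hzY : ∀ k < N, ∀ t ∈ Ioo (k : ℝ) (k + 1), z (m + 1) t = Y t - Y (k + 1) := by
    intro k hk t ht
    have hfl : ⌊t⌋ = (k : ℤ) := Int.floor_eq_iff.2 ⟨by exact_mod_cast ht.1.le,
      by exact_mod_cast ht.2⟩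
    have h1 : m + 2 - (m + 1) = 1 := by omega
    simp only [z, h1, hZ1, hfl, add_zero, Int.cast_natCast]
    obtain ⟨hk0, hk1⟩ := hmem k hk
    rw [hYX t ⟨hk0.1.trans ht.1.le, ht.2.le.trans hk1.2⟩, hYX _ hk1]
  obtain ⟨hzM, hparts⟩ := integral_mul_eq_sum_sub_integral N (hasDerivAt_iterIntegral_succ hc m)
    ((continuous_iterIntegral hc m).mul (hc m)) hY (hc (m + 1)) hzY
  have hsum := integral_iterIntegral_mul_eq_sum hc hN0.le
    (intervalIntegrable_of_backward_primitive hc hN0.le hzM hz) hz m (by omega)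
  simp only [mul_assoc] at hparts hsum
  rw [hsig N _ le_rfl, iterIntegral, hparts, hsum, sub_eq_add_neg]
  congr 1
  · refine Finset.sum_congr rfl fun k hk => ?_
    have hk := Finset.mem_range.1 hk
    rw [hsig k _ hk.le, show m + 2 - 1 = m + 1 by omega, hYX _ (hmem k hk).1, hYX _ (hmem k hk).2]
  · rw [← Finset.sum_neg_distrib, ← Finset.Ico_succ_right_eq_Icc, Finset.sum_Ico_eq_sum_range]
    refine Finset.sum_congr (by simp) fun q hq => ?_
    have hq : q < m + 1 := by simpa using hq
    rw [hsig N _ le_rfl, show m + 2 - (2 + q) = m - q by omega]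
    simp only [z, show m + 2 - (m - q) = 2 + q by omega, h]
    ring
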